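/- Let p_{d+k,d} denote the number of minimal permutations with d descents of length d+k (1 ≤ k ≤ d). Then p_{d+k,d} = Σ (d+k)! · det(A(a_1,...,a_k)), where the sum is over all k-tuples (a_1,...,a_k) of integers with each a_i ≥ 2 and a_1 + ... + a_k = d+k, and A(a_1,...,a_k) is the k×k matrix with entries: a_{i,j} = 1/(a_i + a_{i+1} + ... + a_j + i − j)! when i ≤ j; a_{i,i-1} = 1; a_{i,i-2} = 1 if a_{i-1} = 2 and 0 otherwise; a_{i,j} = 0 when i > j+2. -/

import Mathlib

/-- The number of descents of a word (list of naturals), i.e. the number of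
positions `i` (0-indexed) with `l[i] > l[i+1]`. -/
def descents (l : List ℕ) : ℕ :=
  ((List.range (l.length - 1)).filter (fun i => l.getD (i + 1) 0 < l.getD i 0)).length

/-- `l` is a minimal permutation (word) with `d` descents: it has exactly `d`
descents and deleting any one entry yields a word with `d - 1` descents. -/
def IsMinimal (d : ℕ) (l : List ℕ) : Prop :=
  descents l = d ∧ ∀ i < l.length, descents (l.eraseIdx i) = d - 1

/-- The matrix `A(a_1, ..., a_k)`: entry `(i,j)` is
`1/(a_i + ... + a_j + i - j)!` for `i ≤ j`, is `1` for `i = j + 1`, is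
`χ_{a_{i-1} = 2}` for `i = j + 2`, and is `0` for `i > j + 2` (0-indexed here). -/
def Amat {k : ℕ} (a : Fin k → ℕ) : Matrix (Fin k) (Fin k) ℚ :=
  Matrix.of fun i j =>
    if (i : ℕ) ≤ (j : ℕ) then
      (1 : ℚ) / (Nat.factorial ((∑ m ∈ Finset.Icc i j, a m) + (i : ℕ) - (j : ℕ)) : ℚ)
    else if (i : ℕ) = (j : ℕ) + 1 then 1
    else if (i : ℕ) = (j : ℕ) + 2 then
      (if a ⟨(i : ℕ) - 1, lt_of_le_of_lt (Nat.sub_le _ _) i.isLt⟩ = 2 then 1 else 0)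
    else 0

/-!
Cut a minimal permutation into its descending runs. Minimality means that every run has at least
two letters and that consecutive runs are interlaced: if `… y x` is followed by `z s …`, then
`y ≤ z` and `x ≤ s`. So the minimal permutations with runs of lengths `a₁, …, aₖ` are the standard
fillings of the skew shape with these row lengths in which consecutive rows overlap in two columns.

Recording, for each value, the index of its run turns such a filling into a ballot word, i.e. a
lattice walk from `M` to `L` among strictly decreasing vectors. The number of these walks is
Aitken's `n! det (1 / (L i - M j)!)`: both sides satisfy the same recursion on removal of the last
step, because `x / x! = 1 / (x - 1)!`, and the terms that leave the chamber have two equal rows.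
For the walks at hand, the matrix of this determinant is `A(a₁, …, aₖ)`.
-/

open Finset Nat

section InvFactorialDet

/-- The reciprocal factorial `1 / x!`, extended by `0` to negative integers so that
`x * (1 / x!) = 1 / (x - 1)!` holds for every integer `x`. -/
def invFactorial (x : ℤ) : ℚ := if 0 ≤ x then 1 / x.toNat ! else 0

lemma invFactorial_natCast (n : ℕ) : invFactorial n = 1 / n ! := by simp [invFactorial]

lemma invFactorial_zero : invFactorial 0 = 1 := by simp [invFactorial]

lemma invFactorial_one : invFactorial 1 = 1 := by simp [invFactorial]

lemma invFactorial_of_neg {x : ℤ} (h : x < 0) : invFactorial x = 0 := if_neg h.not_ge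

lemma mul_invFactorial (x : ℤ) : x * invFactorial x = invFactorial (x - 1) := by
  rcases lt_trichotomy x 0 with h | rfl | h
  · rw [invFactorial_of_neg h, invFactorial_of_neg (by omega), mul_zero]
  · rw [invFactorial_of_neg (x := 0 - 1) (by omega), Int.cast_zero, zero_mul]
  · obtain ⟨n, rfl⟩ : ∃ n : ℕ, x = (n + 1 : ℕ) := ⟨(x - 1).toNat, by omega⟩
    have hn : ((n + 1 : ℕ) : ℤ) - 1 = n := by omega
    rw [hn, invFactorial_natCast, invFactorial_natCast, factorial_succ]
    push_cast
    field_simp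

variable {ι : Type*} [Fintype ι] [DecidableEq ι]

/-- The determinant `det (1 / (L i - M j)!)`. With `L i = λ i - i` and `M j = μ j - j` it is
Aitken's determinant for the number of standard Young tableaux of skew shape `λ / μ`, up to the
factor `n!`. -/
def invFactorialDet (L M : ι → ℤ) : ℚ := (Matrix.of fun i j => invFactorial (L i - M j)).det

lemma sum_sub_mul_invFactorialDet (L M : ι → ℤ) :
    ((∑ i, (L i - M i) : ℤ) : ℚ) * invFactorialDet L M =
      ∑ c, invFactorialDet (L - Pi.single c 1) M := by
  have prod_step (σ : Equiv.Perm ι) :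
      ((∑ i, (L i - M i) : ℤ) : ℚ) * ∏ i, invFactorial (L (σ i) - M i) =
        ∑ c, ∏ i, invFactorial ((L - Pi.single c 1 : ι → ℤ) (σ i) - M i) := by
    have hsum : ∑ i, (L i - M i) = ∑ i, (L (σ i) - M i) := by
      rw [sum_sub_distrib, sum_sub_distrib, Equiv.sum_comp σ L]
    rw [hsum, ← Equiv.sum_comp σ (fun c => ∏ i, _), Int.cast_sum, sum_mul]
    refine sum_congr rfl fun c _ => ?_
    rw [← mul_prod_erase _ _ (mem_univ c), ← mul_assoc, mul_invFactorial,
      ← mul_prod_erase (a := c) _ _ (mem_univ c)]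
    congr 1
    · simp [sub_right_comm]
    · refine prod_congr rfl fun i hi => ?_
      simp [ne_of_mem_erase hi]
  simp only [invFactorialDet, Matrix.det_apply', Matrix.of_apply]
  rw [sum_comm, mul_sum]
  refine sum_congr rfl fun σ _ => ?_
  rw [← mul_sum, mul_left_comm, prod_step]

lemma invFactorialDet_eq_zero_of_eq {L : ι → ℤ} (M : ι → ℤ) {i j : ι} (hij : i ≠ j)
    (h : L i = L j) : invFactorialDet L M = 0 :=
  Matrix.det_zero_of_row_eq hij <| by ext; simp [h]

end InvFactorialDet

section InvFactorialDetStrictAnti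

lemma exists_le_le_perm_apply {ι : Type*} [Finite ι] [LinearOrder ι] (σ : Equiv.Perm ι) (c : ι) :
    ∃ j ≤ c, c ≤ σ j := by
  cases nonempty_fintype ι
  by_contra! h
  have hcard : #{j | j ≤ c} ≤ #{j | j < c} :=
    card_le_card_of_injOn σ (fun j hj => by simpa using h j (by simpa using hj))
      σ.injective.injOn
  refine hcard.not_gt (card_lt_card ?_)
  refine ssubset_iff_of_subset (fun j => ?_) |>.mpr ⟨c, by simp⟩
  simpa using le_of_lt

variable {ι : Type*} [Fintype ι] [LinearOrder ι] {L M : ι → ℤ}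

lemma invFactorialDet_self (hM : StrictAnti M) : invFactorialDet M M = 1 := by
  rw [invFactorialDet, Matrix.det_of_isUpperTriangular]
  · simp [invFactorial_zero]
  · intro i j hji
    exact invFactorial_of_neg (sub_neg.mpr (hM hji))

lemma invFactorialDet_eq_zero_of_lt (hL : Antitone L) (hM : Antitone M) {c : ι}
    (h : L c < M c) : invFactorialDet L M = 0 := by
  rw [invFactorialDet, Matrix.det_apply]
  refine sum_eq_zero fun σ _ => ?_
  obtain ⟨j, hjc, hcj⟩ := exists_le_le_perm_apply σ c
  have hneg : L (σ j) - M j < 0 := sub_neg.mpr ((hL hcj).trans_lt (h.trans_le (hM hjc)))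
  rw [prod_eq_zero (mem_univ j) (invFactorial_of_neg hneg), smul_zero]

lemma invFactorialDet_of_sum_eq_zero (hL : StrictAnti L) (hM : StrictAnti M)
    (h : ∑ i, (L i - M i) = 0) : invFactorialDet L M = if M = L then 1 else 0 := by
  split_ifs with hML
  · rw [hML, invFactorialDet_self hL]
  · obtain ⟨c, hc⟩ : ∃ c, L c < M c := by
      by_contra! hle
      refine hML (funext fun c => ?_)
      have := (sum_eq_zero_iff_of_nonneg fun i _ => sub_nonneg.mpr (hle i)).mp h c (mem_univ c)
      omega
    exact invFactorialDet_eq_zero_of_lt hL.antitone hM.antitone hc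

lemma invFactorialDet_sub_single_eq_zero (hL : StrictAnti L) (M : ι → ℤ) {c : ι}
    (h : ¬ StrictAnti (L - Pi.single c 1)) : invFactorialDet (L - Pi.single c 1) M = 0 := by
  simp only [StrictAnti, not_forall, not_lt] at h
  obtain ⟨i, j, hij, hle⟩ := h
  refine invFactorialDet_eq_zero_of_eq M hij.ne (hle.antisymm ?_)
  have hlt := hL hij
  rcases eq_or_ne i c with rfl | hi
  · rw [Pi.sub_apply, Pi.sub_apply, Pi.single_eq_same, Pi.single_eq_of_ne hij.ne']
    omega
  · simp only [Pi.sub_apply, Pi.single_apply, hi, if_false] at hle ⊢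
    split_ifs at hle ⊢ <;> omega

end InvFactorialDetStrictAnti

section LetterCount

variable {ι : Type*} [DecidableEq ι]

/-- For a word `w` in the alphabet `ι`, the number of occurrences of `c` among the first `v`
letters. -/
def letterCount {n : ℕ} (w : Fin n → ι) (v : ℕ) (c : ι) : ℕ := #{u : Fin n | u < v ∧ w u = c}

lemma letterCount_of_le {n v : ℕ} (w : Fin n → ι) (c : ι) (hv : n ≤ v) :
    letterCount w v c = letterCount w n c := by
  simp [letterCount, fun u : Fin n => u.2.trans_le hv]

lemma letterCount_snoc {n : ℕ} (w : Fin n → ι) (v : ℕ) (c c' : ι) :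
    letterCount (Fin.snoc w c : Fin (n + 1) → ι) v c' =
      letterCount w v c' + if n < v ∧ c = c' then 1 else 0 := by
  rw [letterCount, card_filter, Fin.sum_univ_castSucc, ← card_filter]
  simp [letterCount]

end LetterCount

section Ballot

lemma card_subtype_snoc {α : Type*} [Fintype α] {n : ℕ} (p : (Fin (n + 1) → α) → Prop) :
    Nat.card {w // p w} = ∑ c, Nat.card {w : Fin n → α // p (Fin.snoc w c)} := by
  rw [← Nat.card_sigma]
  exact Nat.card_congr <| ((Fin.snocEquiv fun _ => α).subtypeEquivOfSubtype (p := p)).symm.trans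
    (Equiv.subtypeProdEquivSigmaSubtype fun c w => p (Fin.snoc w c))

variable {ι : Type*} [LinearOrder ι] {L M : ι → ℤ}

/-- A ballot word from `M` to `L`: the lattice walk in `ι → ℤ` that starts at `M` and whose
`u`-th step increments the coordinate `w u` ends at `L` and never leaves the Weyl chamber of
strictly decreasing vectors. -/
structure IsBallot {n : ℕ} (M L : ι → ℤ) (w : Fin n → ι) : Prop where
  strictAnti : ∀ v : ℕ, StrictAnti fun c => M c + letterCount w v c
  endpoint : ∀ c, M c + letterCount w n c = L c

lemma isBallot_zero_iff (hM : StrictAnti M) (w : Fin 0 → ι) : IsBallot M L w ↔ M = L := by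
  have hcount (v : ℕ) (c : ι) : letterCount w v c = 0 := by simp [letterCount]
  constructor
  · rintro ⟨-, h⟩
    simpa [hcount, ← funext_iff] using h
  · rintro rfl
    exact ⟨fun v => by simpa [hcount] using hM, fun c => by simp [hcount]⟩

lemma isBallot_snoc_iff {n : ℕ} (hL : StrictAnti L) (w : Fin n → ι) (c : ι) :
    IsBallot M L (Fin.snoc w c : Fin (n + 1) → ι) ↔ IsBallot M (L - Pi.single c 1) w := by
  have endpoint_iff :
      (∀ c', M c' + letterCount (Fin.snoc w c : Fin (n + 1) → ι) (n + 1) c' = L c') ↔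
        ∀ c', M c' + letterCount w n c' = (L - Pi.single c 1 : ι → ℤ) c' := by
    refine forall_congr' fun c' => ?_
    rw [letterCount_snoc, letterCount_of_le w c' n.le_succ, Pi.sub_apply, Pi.single_apply]
    simp only [n.lt_succ_self, true_and, eq_comm (a := c)]
    split_ifs <;> push_cast <;> omega
  have chamber_iff {v : ℕ} (hv : v ≤ n) :
      (StrictAnti fun c' => M c' + letterCount (Fin.snoc w c : Fin (n + 1) → ι) v c') ↔
        StrictAnti fun c' => M c' + letterCount w v c' := by
    simp [letterCount_snoc, hv.not_gt]
  refine ⟨fun h => ⟨fun v => ?_, endpoint_iff.mp h.endpoint⟩,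
    fun h => ⟨fun v => ?_, endpoint_iff.mpr h.endpoint⟩⟩
  · rcases le_total v n with hv | hv
    · exact (chamber_iff hv).mp (h.strictAnti v)
    · simpa only [letterCount_of_le w _ hv] using (chamber_iff le_rfl).mp (h.strictAnti n)
  · rcases le_or_gt v n with hv | hv
    · exact (chamber_iff hv).mpr (h.strictAnti v)
    · simpa only [letterCount_of_le _ _ (succ_le_of_lt hv), endpoint_iff.mpr h.endpoint] using hL

lemma IsBallot.strictAnti_endpoint {n : ℕ} {w : Fin n → ι} (h : IsBallot M L w) :
    StrictAnti L := by
  simpa only [h.endpoint] using h.strictAnti n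

variable [Fintype ι]

lemma card_isBallot_zero (hM : StrictAnti M) :
    Nat.card {w : Fin 0 → ι // IsBallot M L w} = if M = L then 1 else 0 := by
  simp only [isBallot_zero_iff hM]
  split_ifs with h <;> simp [h]

lemma card_isBallot_succ (hL : StrictAnti L) (n : ℕ) :
    Nat.card {w : Fin (n + 1) → ι // IsBallot M L w} =
      ∑ c, Nat.card {w : Fin n → ι // IsBallot M (L - Pi.single c 1) w} := by
  simp only [card_subtype_snoc, isBallot_snoc_iff hL]

theorem card_isBallot (hM : StrictAnti M) (n : ℕ) (hL : StrictAnti L)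
    (hsum : ∑ i, (L i - M i) = n) :
    (Nat.card {w : Fin n → ι // IsBallot M L w} : ℚ) = n ! * invFactorialDet L M := by
  induction n generalizing L with
  | zero =>
    rw [card_isBallot_zero hM, invFactorialDet_of_sum_eq_zero hL hM (by simpa using hsum)]
    simp
  | succ n ih =>
    have card_pred (c : ι) :
        (Nat.card {w : Fin n → ι // IsBallot M (L - Pi.single c 1) w} : ℚ) =
          n ! * invFactorialDet (L - Pi.single c 1) M := by
      by_cases hc : StrictAnti (L - Pi.single c 1)
      · refine ih hc ?_
        simp only [sum_sub_distrib, Pi.sub_apply, Fintype.sum_pi_single'] at hsum ⊢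
        omega
      · have : IsEmpty {w : Fin n → ι // IsBallot M (L - Pi.single c 1) w} :=
          ⟨fun w => hc w.2.strictAnti_endpoint⟩
        rw [invFactorialDet_sub_single_eq_zero hL M hc, Nat.card_of_isEmpty]
        simp
    rw [card_isBallot_succ hL, Nat.cast_sum]
    simp only [card_pred]
    rw [← mul_sum, ← sum_sub_mul_invFactorialDet, hsum, factorial_succ]
    push_cast
    ring

end Ballot

section AitkenMatrix

variable {k : ℕ}

/-- The starting point `M i = ∑_{j > i} (a j - 1)` of the ballot words attached to the composition
`a`. Up to a common shift, `M i = μ i - i` for the inner partition `μ` of the skew shape whose row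
`i` has `a i` cells and overlaps row `i + 1` in two columns. -/
def ballotStart (a : Fin k → ℕ) (i : Fin k) : ℤ := ∑ j ∈ Ioi i, ((a j : ℤ) - 1)

lemma ballotStart_add_eq_sum_Icc (a : Fin k → ℕ) {i j : Fin k} (h : i ≤ j) :
    ballotStart a i + a i = ballotStart a j + 1 + ∑ t ∈ Icc i j, ((a t : ℤ) - 1) := by
  have hunion : Ici i = Icc i j ∪ Ioi j := by
    simpa [← coe_inj] using (Set.Icc_union_Ioi_eq_Ici h).symm
  have hdisj : Disjoint (Icc i j) (Ioi j) :=
    disjoint_left.mpr fun t ht => by simpa using (mem_Icc.mp ht).2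
  have hsum := add_sum_Ioi_eq_sum_Ici (f := fun t => (a t : ℤ) - 1) i
  rw [hunion, sum_union hdisj] at hsum
  unfold ballotStart
  omega

lemma ballotStart_eq_sum_Ioo (a : Fin k → ℕ) {i j : Fin k} (h : i < j) :
    ballotStart a i = ballotStart a j + a j - 1 + ∑ t ∈ Ioo i j, ((a t : ℤ) - 1) := by
  have hunion : Ioi i = Ioo i j ∪ Ici j := by
    simpa [← coe_inj] using (Set.Ioo_union_Ici_eq_Ioi h).symm
  have hdisj : Disjoint (Ioo i j) (Ici j) :=
    disjoint_left.mpr fun t ht => by simpa using (mem_Ioo.mp ht).2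
  have hsum := add_sum_Ioi_eq_sum_Ici (f := fun t => (a t : ℤ) - 1) j
  rw [ballotStart, hunion, sum_union hdisj, ← hsum]
  unfold ballotStart
  ring

lemma Ioo_eq_empty_of_val_eq_succ {i j : Fin k} (h : (i : ℕ) = j + 1) : Ioo j i = ∅ := by
  ext t
  simp only [mem_Ioo, Fin.lt_def, notMem_empty, iff_false]
  omega

lemma Ioo_eq_singleton_of_val_eq_add_two {i j : Fin k} (h : (i : ℕ) = j + 2) :
    Ioo j i = {⟨i - 1, by omega⟩} := by
  ext t
  simp only [mem_Ioo, Fin.lt_def, mem_singleton, Fin.ext_iff]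
  omega

lemma ballotStart_eq_of_val_eq_succ (a : Fin k → ℕ) {i j : Fin k} (h : (i : ℕ) = j + 1) :
    ballotStart a j = ballotStart a i + a i - 1 := by
  have hlt : j < i := Fin.lt_def.mpr (by omega)
  rw [ballotStart_eq_sum_Ioo a hlt, Ioo_eq_empty_of_val_eq_succ h, sum_empty, add_zero]

variable {a : Fin k → ℕ}

lemma ballotStart_le (ha : ∀ i, 2 ≤ a i) {i j : Fin k} (h : i < j) :
    ballotStart a j + a j - 1 ≤ ballotStart a i := by
  rw [ballotStart_eq_sum_Ioo a h]
  have : 0 ≤ ∑ t ∈ Ioo i j, ((a t : ℤ) - 1) := sum_nonneg fun t _ => by have := ha t; omega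
  omega

lemma strictAnti_ballotStart (ha : ∀ i, 2 ≤ a i) : StrictAnti (ballotStart a) := fun i j h => by
  have := ballotStart_le ha h
  have := ha j
  omega

lemma strictAnti_ballotStart_add (ha : ∀ i, 2 ≤ a i) :
    StrictAnti fun i => ballotStart a i + a i := fun i j h => by
  have := ballotStart_le ha h
  have := ha i
  dsimp only
  omega

lemma Amat_apply_of_le (ha : ∀ i, 2 ≤ a i) {i j : Fin k} (h : i ≤ j) :
    Amat a i j = invFactorial (ballotStart a i + a i - ballotStart a j) := by
  have hcard : ∑ t ∈ Icc i j, ((a t : ℤ) - 1) = (∑ t ∈ Icc i j, a t : ℕ) - (j + 1 - i : ℕ) := by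
    simp
  have hge : #(Icc i j) • 1 ≤ ∑ t ∈ Icc i j, a t :=
    card_nsmul_le_sum _ _ _ fun t _ => one_le_two.trans (ha t)
  have hdiff : ballotStart a i + a i - ballotStart a j =
      ((∑ t ∈ Icc i j, a t + i - j : ℕ) : ℤ) := by
    rw [Fin.card_Icc, smul_eq_mul, mul_one] at hge
    rw [ballotStart_add_eq_sum_Icc a h, hcard]
    omega
  rw [hdiff, invFactorial_natCast, Amat, Matrix.of_apply, if_pos (Fin.le_def.mp h)]

lemma Amat_apply_of_lt (ha : ∀ i, 2 ≤ a i) {i j : Fin k} (h : j < i) :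
    Amat a i j = invFactorial (1 - ∑ t ∈ Ioo j i, ((a t : ℤ) - 1)) := by
  simp only [Amat, Matrix.of_apply]
  rw [if_neg (not_le.mpr (Fin.lt_def.mp h))]
  split_ifs with h1 h2 ha2
  · rw [Ioo_eq_empty_of_val_eq_succ h1, sum_empty, sub_zero, invFactorial_one]
  · rw [Ioo_eq_singleton_of_val_eq_add_two h2, sum_singleton, ha2]
    simp [invFactorial_zero]
  · rw [Ioo_eq_singleton_of_val_eq_add_two h2, sum_singleton, invFactorial_of_neg]
    have := ha ⟨i - 1, by omega⟩
    omega
  · have hge : (#(Ioo j i) : ℤ) ≤ ∑ t ∈ Ioo j i, ((a t : ℤ) - 1) := by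
      simpa using card_nsmul_le_sum (Ioo j i) (fun t => (a t : ℤ) - 1) 1
        fun t _ => by have := ha t; omega
    rw [Fin.card_Ioo] at hge
    have := Fin.lt_def.mp h
    exact (invFactorial_of_neg (by omega)).symm

lemma Amat_apply_eq_invFactorial (ha : ∀ i, 2 ≤ a i) (i j : Fin k) :
    Amat a i j = invFactorial (ballotStart a i + a i - ballotStart a j) := by
  rcases le_or_gt i j with h | h
  · exact Amat_apply_of_le ha h
  · rw [Amat_apply_of_lt ha h, ballotStart_eq_sum_Ioo a h]
    congr 1
    ring

lemma det_Amat (ha : ∀ i, 2 ≤ a i) :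
    (Amat a).det = invFactorialDet (fun i => ballotStart a i + a i) (ballotStart a) := by
  rw [invFactorialDet]
  congr 1
  ext i j
  exact Amat_apply_eq_invFactorial ha i j

theorem card_isBallot_ballotStart (ha : ∀ i, 2 ≤ a i) {n : ℕ} (hsum : ∑ i, a i = n) :
    (Nat.card {w : Fin n → Fin k //
      IsBallot (ballotStart a) (fun i => ballotStart a i + a i) w} : ℚ) = n ! * (Amat a).det := by
  rw [det_Amat ha]
  refine card_isBallot (strictAnti_ballotStart ha) n (strictAnti_ballotStart_add ha) ?_
  simp [← hsum]

end AitkenMatrix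

section Runs

/-- The descending runs of a word, i.e. its maximal contiguous strictly decreasing factors. -/
def runs (l : List ℕ) : List (List ℕ) := l.splitBy fun x y => decide (y < x)

lemma flatten_runs (l : List ℕ) : (runs l).flatten = l := List.flatten_splitBy _ l

lemma runs_singleton (x : ℕ) : runs [x] = [[x]] := rfl

lemma sortedGT_of_mem_runs {l c : List ℕ} (h : c ∈ runs l) : c.SortedGT :=
  List.isChain_iff_pairwise.mp (by simpa using List.isChain_of_mem_splitBy h) |>.sortedGT

lemma runs_cons_cons_of_le {y x : ℕ} (h : y ≤ x) (l : List ℕ) :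
    runs (y :: x :: l) = [y] :: runs (x :: l) :=
  List.splitBy_append_cons (l := [y]) l (by simpa using h)

lemma exists_runs_cons (x : ℕ) (l : List ℕ) : ∃ c cs, runs (x :: l) = (x :: c) :: cs := by
  have hne : runs (x :: l) ≠ [] := List.splitBy_ne_nil.mpr (List.cons_ne_nil x l)
  obtain ⟨c, cs, h⟩ := List.exists_cons_of_ne_nil hne
  have hc : c ≠ [] := List.ne_nil_of_mem_splitBy (l := x :: l) (h ▸ List.mem_cons_self)
  obtain ⟨x', c, rfl⟩ := List.exists_cons_of_ne_nil hc
  have hflat := flatten_runs (x :: l)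
  rw [h, List.flatten_cons, List.cons_append, List.cons.injEq] at hflat
  exact ⟨c, cs, hflat.1 ▸ h⟩

lemma runs_cons_cons_of_lt {y x : ℕ} (h : x < y) {l c : List ℕ} {cs : List (List ℕ)}
    (hx : runs (x :: l) = (x :: c) :: cs) : runs (y :: x :: l) = (y :: x :: c) :: cs := by
  obtain ⟨hflat, hnil, hdesc, hchain⟩ := List.splitBy_eq_iff.mp hx
  refine List.splitBy_eq_iff.mpr ⟨by simp [hflat], by simp_all, ?_, ?_⟩
  · simpa [h] using hdesc
  · cases cs with
    | nil => simp
    | cons => simpa using hchain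

lemma descents_cons_cons (y x : ℕ) (l : List ℕ) :
    descents (y :: x :: l) = (if x < y then 1 else 0) + descents (x :: l) := by
  simp only [descents, List.length_cons, Nat.add_sub_cancel]
  rw [List.range_succ_eq_map, List.filter_cons, List.filter_map]
  split_ifs <;> simp_all [Function.comp_def, add_comm]

lemma descents_add_length_runs (l : List ℕ) : descents l + (runs l).length = l.length := by
  induction l with
  | nil => rfl
  | cons y l ih =>
    cases l with
    | nil => rfl
    | cons x l =>
      rw [descents_cons_cons]
      split_ifs with h
      · obtain ⟨c, cs, hx⟩ := exists_runs_cons x l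
        simp only [hx, runs_cons_cons_of_lt h hx, List.length_cons] at ih ⊢
        omega
      · simp only [runs_cons_cons_of_le (not_lt.mp h), List.length_cons] at ih ⊢
        omega

/-- Two decreasing words `c` and `c'` are interlaced if the smallest letter of `c` is at most the
second largest letter of `c'` and the second smallest letter of `c` is at most the largest letter
of `c'`. Counting letters on either side of every threshold `v` says this without naming the
letters. -/
def Interlaced (c c' : List ℕ) : Prop := ∀ v, 2 ≤ c'.countP (v ≤ ·) + c.countP (· < v)

/-- A list of decreasing words with at least two letters each, consecutive ones being interlaced:
the condition on the runs of a word that characterizes minimality. -/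
structure IsInterlacing (cs : List (List ℕ)) : Prop where
  sortedGT : ∀ c ∈ cs, c.SortedGT
  two_le_length : ∀ c ∈ cs, 2 ≤ c.length
  isChain : cs.IsChain Interlaced

lemma Interlaced.getLast_le_head {c c' : List ℕ} (h : Interlaced c c') (hc : c.SortedGT)
    (hc' : c'.SortedGT) (hne : c ≠ []) (hne' : c' ≠ []) : c.getLast hne ≤ c'.head hne' := by
  by_contra! hlt
  have hlast : c.countP (· < c.getLast hne) = 0 := List.countP_eq_zero.mpr fun x hx => by
    simpa using hc.sortedGE.pairwise.rel_getLast hx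
  have hhead : c'.countP (c.getLast hne ≤ ·) = 0 := List.countP_eq_zero.mpr fun x hx => by
    simpa using (hc'.sortedGE.pairwise.rel_head hx).trans_lt hlt
  have := h (c.getLast hne)
  omega

lemma IsInterlacing.runs_flatten {cs : List (List ℕ)} (h : IsInterlacing cs) :
    runs cs.flatten = cs := by
  have hne {c : List ℕ} (hc : c ∈ cs) : c ≠ [] :=
    List.ne_nil_of_length_pos (two_pos.trans_le (h.two_le_length c hc))
  refine List.splitBy_flatten (fun hnil => hne hnil rfl) (fun c hc => ?_)
    (h.isChain.imp_of_mem_imp fun c c' hc hc' hcc' => ⟨hne hc, hne hc', ?_⟩)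
  · simpa using (h.sortedGT c hc).isChain
  · simpa using hcc'.getLast_le_head (h.sortedGT c hc) (h.sortedGT c' hc') (hne hc) (hne hc')

lemma isInterlacing_cons_cons_iff {c c' : List ℕ} {cs : List (List ℕ)} :
    IsInterlacing (c :: c' :: cs) ↔
      c.SortedGT ∧ 2 ≤ c.length ∧ Interlaced c c' ∧ IsInterlacing (c' :: cs) := by
  constructor
  · rintro ⟨hs, hl, hc⟩
    rw [List.forall_mem_cons] at hs hl
    rw [List.isChain_cons_cons] at hc
    exact ⟨hs.1, hl.1, hc.1, hs.2, hl.2, hc.2⟩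
  · rintro ⟨hs, hl, hc, h⟩
    exact ⟨List.forall_mem_cons.mpr ⟨hs, h.sortedGT⟩,
      List.forall_mem_cons.mpr ⟨hl, h.two_le_length⟩, List.isChain_cons_cons.mpr ⟨hc, h.isChain⟩⟩

lemma isInterlacing_singleton_iff {c : List ℕ} : IsInterlacing [c] ↔ c.SortedGT ∧ 2 ≤ c.length :=
  ⟨fun h => ⟨h.sortedGT c (by simp), h.two_le_length c (by simp)⟩,
    fun h => ⟨by simpa using h.1, by simpa using h.2, List.isChain_singleton c⟩⟩

lemma interlaced_pair_iff {y x z s : ℕ} {c : List ℕ} (hxy : x < y) (hc : (z :: s :: c).SortedGT) :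
    Interlaced [y, x] (z :: s :: c) ↔ y ≤ z ∧ x ≤ s := by
  have hsz : s < z := List.rel_of_pairwise_cons hc.pairwise List.mem_cons_self
  have hcs (t : ℕ) (ht : t ∈ c) : t < s := List.rel_of_pairwise_cons hc.pairwise.tail ht
  have count_eq_zero {v : ℕ} (hv : s ≤ v) : c.countP (v ≤ ·) = 0 :=
    List.countP_eq_zero.mpr fun t ht => by simpa using (hcs t ht).trans_le hv
  simp only [Interlaced, List.countP_cons, List.countP_nil, decide_eq_true_eq]
  constructor
  · intro h
    have hz := h (z + 1)
    have hs := h (s + 1)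
    rw [count_eq_zero (by omega)] at hz hs
    split_ifs at hz hs <;> omega
  · rintro ⟨hyz, hxs⟩ v
    split_ifs <;> omega

lemma interlaced_cons_left_iff {y x z : ℕ} {c c' : List ℕ} (hxy : x < y) (hzx : z < x) :
    Interlaced (y :: x :: z :: c) c' ↔ Interlaced (x :: z :: c) c' := by
  refine forall_congr' fun v => ?_
  simp only [List.countP_cons, decide_eq_true_eq]
  split_ifs <;> omega

lemma isInterlacing_cons_head_iff {y x z : ℕ} {c : List ℕ} {cs : List (List ℕ)}
    (hxy : x < y) (hzx : z < x) (hc : (x :: z :: c).SortedGT) :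
    IsInterlacing ((y :: x :: z :: c) :: cs) ↔ IsInterlacing ((x :: z :: c) :: cs) := by
  have hc' : (y :: x :: z :: c).SortedGT :=
    List.IsChain.sortedGT (List.isChain_cons_cons.mpr ⟨hxy, hc.isChain⟩)
  cases cs with
  | nil => simp [isInterlacing_singleton_iff, hc, hc']
  | cons c' cs => simp [isInterlacing_cons_cons_iff, hc, hc', interlaced_cons_left_iff hxy hzx]

/-- The part of the minimality of `l` that concerns the entries other than the first: deleting any
of these removes exactly one descent. In contrast to minimality, it can be checked recursively. -/
def IsTailMinimal (l : List ℕ) : Prop :=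
  ∀ i, i + 1 < l.length → descents (l.eraseIdx (i + 1)) + 1 = descents l

lemma isTailMinimal_pair {y x : ℕ} : IsTailMinimal [y, x] ↔ x < y := by
  have h : IsTailMinimal [y, x] ↔ descents [y] + 1 = descents [y, x] := by
    refine ⟨fun h => h 0 (by simp), fun h i hi => ?_⟩
    obtain rfl : i = 0 := by simpa using hi
    exact h
  have hy : descents [y] = 0 := rfl
  have hx : descents [x] = 0 := rfl
  rw [h, descents_cons_cons, hy, hx]
  split_ifs with hxy <;> simp [hxy]

lemma isTailMinimal_cons_cons_cons {y x z : ℕ} {l : List ℕ} :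
    IsTailMinimal (y :: x :: z :: l) ↔
      ((z < x ∧ x < y) ∨ (y ≤ z ∧ (x < y ∨ z < x))) ∧ IsTailMinimal (x :: z :: l) := by
  have hfirst : descents (y :: z :: l) + 1 = descents (y :: x :: z :: l) ↔
      (z < x ∧ x < y) ∨ (y ≤ z ∧ (x < y ∨ z < x)) := by
    simp only [descents_cons_cons]
    split_ifs <;> omega
  have hrest (i : ℕ) :
      descents ((y :: x :: z :: l).eraseIdx (i + 2)) + 1 = descents (y :: x :: z :: l) ↔
        descents ((x :: z :: l).eraseIdx (i + 1)) + 1 = descents (x :: z :: l) := by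
    simp only [List.eraseIdx_cons_succ, descents_cons_cons y x]
    omega
  rw [← hfirst]
  constructor
  · intro h
    exact ⟨h 0 (by simp), fun i hi => (hrest i).mp (h (i + 1) (by simpa using hi))⟩
  · rintro ⟨h0, h⟩ (_ | i) hi
    · exact h0
    · exact (hrest i).mpr (h i (by simpa using hi))

lemma not_isInterlacing_of_singleton_mem {x : ℕ} {cs : List (List ℕ)} (h : [x] ∈ cs) :
    ¬ IsInterlacing cs :=
  fun hcs => by simpa using hcs.two_le_length [x] h

lemma lt_of_isInterlacing_runs {y x : ℕ} {l : List ℕ} (h : IsInterlacing (runs (y :: x :: l))) :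
    x < y := by
  by_contra! hle
  rw [runs_cons_cons_of_le hle l] at h
  exact not_isInterlacing_of_singleton_mem List.mem_cons_self h

lemma isInterlacing_runs_cons_iff {y x z : ℕ} (hxy : x < y) (hzx : z < x) (l : List ℕ) :
    IsInterlacing (runs (y :: x :: z :: l)) ↔ IsInterlacing (runs (x :: z :: l)) := by
  obtain ⟨c, cs, hz⟩ := exists_runs_cons z l
  have hx := runs_cons_cons_of_lt hzx hz
  rw [runs_cons_cons_of_lt hxy hx, hx]
  exact isInterlacing_cons_head_iff hxy hzx (sortedGT_of_mem_runs (hx ▸ List.mem_cons_self))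

lemma isInterlacing_runs_pair_iff {y x z s : ℕ} (hxy : x < y) (hxz : x ≤ z) (hsz : s < z)
    (l : List ℕ) :
    IsInterlacing (runs (y :: x :: z :: s :: l)) ↔
      (y ≤ z ∧ x ≤ s) ∧ IsInterlacing (runs (z :: s :: l)) := by
  obtain ⟨c, cs, hs⟩ := exists_runs_cons s l
  have hz := runs_cons_cons_of_lt hsz hs
  rw [runs_cons_cons_of_lt hxy (runs_cons_cons_of_le hxz (s :: l)), hz, isInterlacing_cons_cons_iff,
    interlaced_pair_iff hxy (sortedGT_of_mem_runs (hz ▸ List.mem_cons_self))]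
  simp [hxy, List.sortedGT_iff_pairwise]

theorem isTailMinimal_iff_isInterlacing_runs {y x : ℕ} (hxy : x < y) :
    ∀ l, IsTailMinimal (y :: x :: l) ↔ IsInterlacing (runs (y :: x :: l))
  | [] => by
    rw [isTailMinimal_pair, runs_cons_cons_of_lt hxy (runs_singleton x),
      isInterlacing_singleton_iff]
    simp [hxy, List.sortedGT_iff_pairwise]
  | z :: l => by
    rw [isTailMinimal_cons_cons_cons]
    rcases lt_or_ge z x with hzx | hxz
    · rw [isTailMinimal_iff_isInterlacing_runs hzx l, isInterlacing_runs_cons_iff hxy hzx]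
      simp [hzx, hxy]
    · rcases l with - | ⟨s, l⟩
      · rw [isTailMinimal_pair, runs_cons_cons_of_lt hxy (runs_cons_cons_of_le hxz [])]
        exact iff_of_false (fun h => hxz.not_gt h.2)
          (not_isInterlacing_of_singleton_mem (x := z) (by simp [runs_singleton]))
      · rw [isTailMinimal_cons_cons_cons]
        rcases lt_or_ge s z with hsz | hzs
        · rw [isTailMinimal_iff_isInterlacing_runs hsz l, isInterlacing_runs_pair_iff hxy hxz hsz,
            ← and_assoc]
          refine and_congr_left' ?_
          omega
        · rw [runs_cons_cons_of_lt hxy (runs_cons_cons_of_le hxz _), runs_cons_cons_of_le hzs]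
          exact iff_of_false (by omega)
            (not_isInterlacing_of_singleton_mem (x := z) (by simp))

lemma isMinimal_iff {d : ℕ} (hd : 0 < d) {l : List ℕ} :
    IsMinimal d l ↔ descents l = d ∧ IsInterlacing (runs l) := by
  refine and_congr_right ?_
  rintro rfl
  rcases l with - | ⟨y, - | ⟨x, l⟩⟩
  · exact absurd hd (lt_irrefl 0)
  · exact absurd hd (lt_irrefl 0)
  · have hfirst : descents (x :: l) = descents (y :: x :: l) - 1 ↔ x < y := by
      rw [descents_cons_cons] at hd ⊢
      split_ifs at hd ⊢ <;> omega
    constructor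
    · intro h
      rw [← isTailMinimal_iff_isInterlacing_runs (hfirst.mp (h 0 (by simp)))]
      intro i hi
      rw [h (i + 1) hi, Nat.sub_add_cancel hd]
    · intro h
      have hxy := lt_of_isInterlacing_runs h
      rw [← isTailMinimal_iff_isInterlacing_runs hxy] at h
      rintro (_ | i) hi
      · exact hfirst.mpr hxy
      · exact Nat.eq_sub_of_add_eq (h i hi)

end Runs

section Words

variable {n k : ℕ}

/-- The positions of the letter `c` in the word `w`, in decreasing order. -/
def block (w : Fin n → Fin k) (c : Fin k) : List ℕ :=
  (({u | w u = c} : Finset (Fin n)).map Fin.valEmbedding).sort (· ≥ ·)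

/-- The list of all blocks of a word, in the order of the letters. -/
def blocks (w : Fin n → Fin k) : List (List ℕ) := List.ofFn (block w)

lemma sortedGT_block (w : Fin n → Fin k) (c : Fin k) : (block w c).SortedGT := sortedGT_sort _

lemma mem_block {w : Fin n → Fin k} {c : Fin k} {v : ℕ} :
    v ∈ block w c ↔ ∃ u : Fin n, w u = c ∧ u = v := by
  simp [block]

lemma countP_lt_block (w : Fin n → Fin k) (c : Fin k) (v : ℕ) :
    (block w c).countP (· < v) = letterCount w v c := by
  rw [← Multiset.coe_countP, block, sort_eq, Multiset.countP_eq_card_filter, ← filter_val, card_val,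
    filter_map, card_map, filter_filter, letterCount]
  simp [and_comm]

lemma length_block (w : Fin n → Fin k) (c : Fin k) : (block w c).length = letterCount w n c := by
  simp [block, letterCount]

lemma interlaced_block_iff (w : Fin n → Fin k) (c c' : Fin k) :
    Interlaced (block w c) (block w c') ↔
      ∀ v, letterCount w v c' + 2 ≤ letterCount w n c' + letterCount w v c := by
  refine forall_congr' fun v => ?_
  have hsplit := List.length_eq_countP_add_countP (· < v) (l := block w c')
  simp only [decide_eq_true_eq, not_lt, countP_lt_block, length_block] at hsplit ⊢
  omega

lemma isInterlacing_blocks_iff (w : Fin n → Fin k) :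
    IsInterlacing (blocks w) ↔ (∀ c, 2 ≤ letterCount w n c) ∧
      ∀ i (hi : i + 1 < k), Interlaced (block w ⟨i, by omega⟩) (block w ⟨i + 1, hi⟩) := by
  have hchain : (blocks w).IsChain Interlaced ↔
      ∀ i (hi : i + 1 < k), Interlaced (block w ⟨i, by omega⟩) (block w ⟨i + 1, hi⟩) :=
    List.isChain_ofFn
  refine ⟨fun h => ⟨?_, hchain.mp h.isChain⟩, fun h => ⟨?_, ?_, hchain.mpr h.2⟩⟩
  · simpa [blocks, List.forall_mem_ofFn_iff, length_block] using h.two_le_length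
  · simp [blocks, sortedGT_block]
  · simpa [blocks, List.forall_mem_ofFn_iff, length_block] using h.1

lemma strictAnti_iff_forall_val_succ {f : Fin k → ℤ} :
    StrictAnti f ↔ ∀ i (hi : i + 1 < k), f ⟨i + 1, hi⟩ < f ⟨i, by omega⟩ := by
  rw [← List.sortedGT_ofFn_iff, List.sortedGT_iff_isChain, List.isChain_ofFn]

lemma isBallot_iff_isInterlacing_blocks {a : Fin k → ℕ} (ha : ∀ i, 2 ≤ a i) (w : Fin n → Fin k) :
    IsBallot (ballotStart a) (fun i => ballotStart a i + a i) w ↔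
      letterCount w n = a ∧ IsInterlacing (blocks w) := by
  have endpoint_iff : (∀ c, ballotStart a c + letterCount w n c = ballotStart a c + a c) ↔
      letterCount w n = a := by
    simp [funext_iff]
  have chamber_iff (hw : letterCount w n = a) :
      (∀ v : ℕ, StrictAnti fun c => ballotStart a c + letterCount w v c) ↔
        IsInterlacing (blocks w) := by
    simp only [isInterlacing_blocks_iff, hw, ha, implies_true, true_and, interlaced_block_iff,
      strictAnti_iff_forall_val_succ]
    rw [forall_comm]
    refine forall_congr' fun i => ?_
    rw [forall_comm]
    refine forall₂_congr fun hi v => ?_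
    rw [ballotStart_eq_of_val_eq_succ a (i := ⟨i + 1, hi⟩) (j := ⟨i, by omega⟩) rfl]
    omega
  constructor
  · rintro ⟨hanti, hend⟩
    have hw := endpoint_iff.mp hend
    exact ⟨hw, (chamber_iff hw).mp hanti⟩
  · rintro ⟨hw, h⟩
    exact ⟨(chamber_iff hw).mpr h, endpoint_iff.mpr hw⟩

lemma flatten_blocks_perm_range (w : Fin n → Fin k) :
    (blocks w).flatten.Perm (List.range n) := by
  have hnodup : (blocks w).flatten.Nodup := by
    refine List.nodup_flatten.mpr ⟨?_, ?_⟩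
    · simp [blocks, (sortedGT_block w _).nodup]
    · refine List.pairwise_ofFn.mpr fun c c' hlt v hv hv' => ?_
      obtain ⟨u, hu, rfl⟩ := mem_block.mp hv
      obtain ⟨u', hu', heq⟩ := mem_block.mp hv'
      rw [Fin.ext heq, hu] at hu'
      exact hlt.ne hu'
  refine (List.perm_ext_iff_of_nodup hnodup List.nodup_range).mpr fun v => ?_
  simp only [blocks, List.mem_flatten, List.mem_ofFn, List.mem_range]
  constructor
  · rintro ⟨_, ⟨c, rfl⟩, hv⟩
    obtain ⟨u, -, rfl⟩ := mem_block.mp hv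
    exact u.2
  · intro hv
    exact ⟨_, ⟨w ⟨v, hv⟩, rfl⟩, mem_block.mpr ⟨⟨v, hv⟩, rfl, rfl⟩⟩

lemma blocks_injective : Function.Injective (blocks : (Fin n → Fin k) → List (List ℕ)) := by
  intro w w' h
  have hblock := List.ofFn_injective h
  funext u
  have hu : (u : ℕ) ∈ block w' (w u) := congrFun hblock (w u) ▸ mem_block.mpr ⟨u, rfl, rfl⟩
  obtain ⟨u', hw, hu'⟩ := mem_block.mp hu
  rw [← hw, Fin.ext hu']

lemma exists_blocks_eq {cs : List (List ℕ)} (hsorted : ∀ c ∈ cs, c.SortedGT)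
    (hperm : cs.flatten.Perm (List.range n)) (hk : cs.length = k) :
    ∃ w : Fin n → Fin k, blocks w = cs := by
  subst hk
  have hmem (u : Fin n) : ∃ c : Fin cs.length, (u : ℕ) ∈ cs.get c := by
    obtain ⟨c, hc, hu⟩ := List.mem_flatten.mp (hperm.mem_iff.mpr (List.mem_range.mpr u.2))
    obtain ⟨i, rfl⟩ := List.get_of_mem hc
    exact ⟨i, hu⟩
  choose w hw using hmem
  have hdisj := (List.nodup_flatten.mp (hperm.nodup_iff.mpr List.nodup_range)).2
  have unique {u : Fin n} {c : Fin cs.length} (hu : (u : ℕ) ∈ cs.get c) : w u = c := by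
    rcases lt_trichotomy (w u) c with hlt | heq | hgt
    · exact (List.pairwise_iff_get.mp hdisj _ _ hlt (hw u) hu).elim
    · exact heq
    · exact (List.pairwise_iff_get.mp hdisj _ _ hgt hu (hw u)).elim
  refine ⟨w, (congrArg List.ofFn (funext fun c => ?_)).trans (List.ofFn_get cs)⟩
  have hc : (cs.get c).SortedGT := hsorted _ (List.get_mem cs c)
  have htoFinset : (({u | w u = c} : Finset (Fin n)).map Fin.valEmbedding) =
      (cs.get c).toFinset := by
    ext v
    simp only [mem_map, mem_filter, mem_univ, true_and, Fin.valEmbedding_apply, List.mem_toFinset]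
    constructor
    · rintro ⟨u, rfl, rfl⟩
      exact hw u
    · intro hv
      have hvn : v < n := List.mem_range.mp
        (hperm.mem_iff.mp (List.mem_flatten.mpr ⟨_, List.get_mem cs c, hv⟩))
      exact ⟨⟨v, hvn⟩, unique hv, rfl⟩
  rw [block, htoFinset]
  exact (List.toFinset_sort _ hc.nodup).mpr hc.sortedGE.pairwise

lemma isMinimal_iff_of_length {d k : ℕ} (hd : 0 < d) {l : List ℕ} (hl : l.length = d + k) :
    IsMinimal d l ↔ (runs l).length = k ∧ IsInterlacing (runs l) := by
  have := descents_add_length_runs l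
  rw [isMinimal_iff hd]
  refine and_congr_left' ?_
  omega

theorem card_perm_range_isMinimal {d : ℕ} (hd : 0 < d) (k : ℕ) :
    Nat.card {l : List ℕ // l.Perm (List.range (d + k)) ∧ IsMinimal d l} =
      Nat.card {w : Fin (d + k) → Fin k // IsInterlacing (blocks w)} := by
  have minimal_iff {l : List ℕ} (hl : l.Perm (List.range (d + k))) :=
    isMinimal_iff_of_length (k := k) hd (hl.length_eq.trans List.length_range)
  have hminimal (w : {w : Fin (d + k) → Fin k // IsInterlacing (blocks w)}) :
      IsMinimal d (blocks w.1).flatten := by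
    rw [minimal_iff (flatten_blocks_perm_range w.1), w.2.runs_flatten]
    exact ⟨List.length_ofFn, w.2⟩
  refine (Nat.card_eq_of_bijective
    (fun w => ⟨(blocks w.1).flatten, flatten_blocks_perm_range w.1, hminimal w⟩) ⟨?_, ?_⟩).symm
  · intro w w' h
    have hruns := congrArg runs (congrArg Subtype.val h)
    rw [w.2.runs_flatten, w'.2.runs_flatten] at hruns
    exact Subtype.ext (blocks_injective hruns)
  · rintro ⟨l, hl, hmin⟩
    obtain ⟨hk, hruns⟩ := (minimal_iff hl).mp hmin
    obtain ⟨w, hw⟩ := exists_blocks_eq hruns.sortedGT ((flatten_runs l).symm ▸ hl) hk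
    have hflat : (blocks w).flatten = l := by rw [hw, flatten_runs]
    exact ⟨⟨w, hw.symm ▸ hruns⟩, Subtype.ext hflat⟩

lemma sum_letterCount (w : Fin n → Fin k) : ∑ c, letterCount w n c = n := by
  simpa [letterCount] using
    (card_eq_sum_card_fiberwise (f := w) (s := univ) (t := univ) (by simp)).symm

theorem card_isInterlacing_blocks (n k : ℕ) :
    Nat.card {w : Fin n → Fin k // IsInterlacing (blocks w)} =
      ∑ a ∈ (Finset.Nat.antidiagonalTuple k n).filter (fun a => ∀ i, 2 ≤ a i),
        Nat.card {w : Fin n → Fin k //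
          IsBallot (ballotStart a) (fun i => ballotStart a i + a i) w} := by
  classical
  simp only [Nat.card_eq_fintype_card, Fintype.card_subtype]
  rw [card_eq_sum_card_fiberwise (f := fun w => letterCount w n)]
  · refine sum_congr rfl fun a ha => ?_
    rw [filter_filter]
    refine congrArg card (filter_congr fun w _ => ?_)
    rw [isBallot_iff_isInterlacing_blocks (mem_filter.mp ha).2, and_comm]
  · intro w hw
    have hcount := ((isInterlacing_blocks_iff w).mp (by simpa using hw)).1
    simpa [Finset.Nat.mem_antidiagonalTuple, sum_letterCount] using hcount

end Words

/-- The number `p_{d+k,d}` of minimal permutations with `d` descents of length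
`d + k` equals the sum, over all `k`-tuples `(a_1, ..., a_k)` with all `a_i ≥ 2`
and `a_1 + ⋯ + a_k = d + k`, of `(d+k)! * det A(a_1, ..., a_k)`. -/
theorem card_minimal_eq_sum_det (d k : ℕ) (hk : 1 ≤ k) (hkd : k ≤ d) :
    (Nat.card {l : List ℕ // l.Perm (List.range (d + k)) ∧ IsMinimal d l} : ℚ) =
      ∑ a ∈ (Finset.Nat.antidiagonalTuple k (d + k)).filter (fun a => ∀ i, 2 ≤ a i),
        ((d + k).factorial : ℚ) * (Amat a).det := by
  rw [card_perm_range_isMinimal (hk.trans hkd), card_isInterlacing_blocks, Nat.cast_sum]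
  refine sum_congr rfl fun a ha => ?_
  obtain ⟨hsum, htwo⟩ := mem_filter.mp ha
  exact card_isBallot_ballotStart htwo (Finset.Nat.mem_antidiagonalTuple.mp hsum)
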